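/- Let R be a coherent commutative ring, 𝔗 a torsion theory over R, 𝔞 a finitely generated ideal of R, and M an R-module. Then 𝔗-Kgrade_R(𝔞,M) = 𝔗-Egrade_R(𝔞,M). -/

import Mathlib

open CategoryTheory

universe u

noncomputable section

/-- A torsion theory over `R`: a class of `R`-modules closed under isomorphism, submodules,
quotient modules, extensions, and directed colimits (formulated as closure under directed
unions of submodules). -/
structure IsTorsionTheory (R : Type u) [CommRing R] (T : Set (ModuleCat.{u} R)) : Prop where
  mem_of_iso : ∀ {N N' : ModuleCat.{u} R}, (N ≅ N') → N ∈ T → N' ∈ T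
  submodule_mem : ∀ {N : ModuleCat.{u} R}, N ∈ T → ∀ S : Submodule R N,
    ModuleCat.of R S ∈ T
  quotient_mem : ∀ {N : ModuleCat.{u} R}, N ∈ T → ∀ S : Submodule R N,
    ModuleCat.of R (N ⧸ S) ∈ T
  ext_mem : ∀ {N : ModuleCat.{u} R} (S : Submodule R N),
    ModuleCat.of R S ∈ T → ModuleCat.of R (N ⧸ S) ∈ T → N ∈ T
  directed_mem : ∀ {N : ModuleCat.{u} R} {ι : Type u} [Nonempty ι] (S : ι → Submodule R N),
    Directed (· ≤ ·) S → (∀ i, ModuleCat.of R (S i) ∈ T) → iSup S = ⊤ → N ∈ T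

variable {R : Type u} [CommRing R]

/-- The "outgoing" differential of the Koszul cocomplex `Hom_R(K_•(x), M)`, whose degree `i`
component is indexed by the `i`-element subsets of `{1, …, r}`. -/
def koszulDiff {r : ℕ} (x : Fin r → R) (M : Type u) [AddCommGroup M] [Module R M] (i : ℕ) :
    ({s : Finset (Fin r) // s.card = i} → M) →ₗ[R]
      ({s : Finset (Fin r) // s.card = i + 1} → M) where
  toFun φ t := ∑ j ∈ t.1.attach,
    ((-1 : R) ^ (t.1.filter (fun k => k < j.1)).card * x j.1) •
      φ ⟨t.1.erase j.1, by simp [Finset.card_erase_of_mem j.2, t.2]⟩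
  map_add' φ ψ := by
    funext t
    simp [Finset.sum_add_distrib, smul_add]
  map_smul' c φ := by
    funext t
    simp [Finset.smul_sum, smul_comm c]

/-- The "incoming" differential of the Koszul cocomplex in degree `i`
(its source is trivial when `i = 0`). -/
def koszulDiffIn {r : ℕ} (x : Fin r → R) (M : Type u) [AddCommGroup M] [Module R M] (i : ℕ) :
    ({s : Finset (Fin r) // s.card + 1 = i} → M) →ₗ[R]
      ({s : Finset (Fin r) // s.card = i} → M) where
  toFun φ t := ∑ j ∈ t.1.attach,
    ((-1 : R) ^ (t.1.filter (fun k => k < j.1)).card * x j.1) •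
      φ ⟨t.1.erase j.1, by rw [Finset.card_erase_add_one j.2]; exact t.2⟩
  map_add' φ ψ := by
    funext t
    simp [Finset.sum_add_distrib, smul_add]
  map_smul' c φ := by
    funext t
    simp [Finset.smul_sum, smul_comm c]

/-- The `i`-th Koszul cohomology `H^i(x; M)` of `M` with respect to `x₁, …, x_r`, i.e. the
`i`-th cohomology of the cocomplex `Hom_R(K_•(x), M)`. -/
abbrev koszulCohomology {r : ℕ} (x : Fin r → R) (M : Type u) [AddCommGroup M] [Module R M]
    (i : ℕ) : Type u :=
  ↥(LinearMap.ker (koszulDiff x M i)) ⧸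
    (Submodule.comap (LinearMap.ker (koszulDiff x M i)).subtype
      (LinearMap.range (koszulDiffIn x M i)))

/-- The `𝔗`-Koszul grade of the ideal `(x₁, …, x_r)` on `M`: the infimum of the set of `i`
such that `H^i(x; M) ∉ 𝔗` (with `inf ∅ = +∞`). -/
def TKgrade (T : Set (ModuleCat.{u} R)) {r : ℕ} (x : Fin r → R) (M : Type u)
    [AddCommGroup M] [Module R M] : ℕ∞ :=
  sInf ((↑· : ℕ → ℕ∞) '' {i | ModuleCat.of R (koszulCohomology x M i) ∉ T})

/-- A commutative ring is coherent if every finitely generated ideal is finitely presented. -/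
def IsCoherentRing (R : Type u) [CommRing R] : Prop :=
  ∀ I : Ideal R, I.FG → Module.FinitePresentation R I

/-- The `𝔗`-Ext grade of `𝔞` on `M`: the infimum of the set of `i` such that
`Ext^i_R(R/𝔞, M) ∉ 𝔗` (with `inf ∅ = +∞`). -/
def TEgrade (T : Set (ModuleCat.{u} R)) (a : Ideal R) (M : Type u)
    [AddCommGroup M] [Module R M] : ℕ∞ :=
  sInf ((↑· : ℕ → ℕ∞) '' {i | ((Ext R (ModuleCat.{u} R) i).obj
    (Opposite.op (ModuleCat.of R (R ⧸ a)))).obj (ModuleCat.of R M) ∉ T})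

namespace IsTorsionTheory

variable {T : Set (ModuleCat.{u} R)}

lemma mem_of_injective (hT : IsTorsionTheory R T)
    {A B : Type u} [AddCommGroup A] [Module R A] [AddCommGroup B] [Module R B]
    (f : A →ₗ[R] B) (hf : Function.Injective f) (hB : ModuleCat.of R B ∈ T) :
    ModuleCat.of R A ∈ T :=
  hT.mem_of_iso (LinearEquiv.ofInjective f hf).symm.toModuleIso
    (hT.submodule_mem hB (LinearMap.range f))

lemma mem_of_surjective (hT : IsTorsionTheory R T)
    {A B : Type u} [AddCommGroup A] [Module R A] [AddCommGroup B]
    [Module R B] (f : A →ₗ[R] B) (hf : Function.Surjective f) (hA : ModuleCat.of R A ∈ T) :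
    ModuleCat.of R B ∈ T :=
  hT.mem_of_iso (f.quotKerEquivOfSurjective hf).toModuleIso
    (hT.quotient_mem hA (LinearMap.ker f))

lemma mem_of_exact (hT : IsTorsionTheory R T)
    {A B C : Type u} [AddCommGroup A] [Module R A] [AddCommGroup B]
    [Module R B] [AddCommGroup C] [Module R C] (f : A →ₗ[R] B) (g : B →ₗ[R] C)
    (h : LinearMap.ker g ≤ LinearMap.range f)
    (hA : ModuleCat.of R A ∈ T) (hC : ModuleCat.of R C ∈ T) : ModuleCat.of R B ∈ T := by
  refine hT.ext_mem (N := ModuleCat.of R B) (LinearMap.ker g) ?_ ?_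
  · exact hT.mem_of_injective (Submodule.inclusion h) (Submodule.inclusion_injective h)
      (hT.mem_of_surjective f.rangeRestrict f.surjective_rangeRestrict hA)
  · exact hT.mem_of_injective ((LinearMap.ker g).liftQ g le_rfl)
      (LinearMap.ker_eq_bot.1 (Submodule.ker_liftQ_eq_bot _ _ _ le_rfl)) hC

lemma mem_of_shortComplex_exact (hT : IsTorsionTheory R T)
    {S : ShortComplex (ModuleCat.{u} R)} (hS : S.Exact)
    (h₁ : S.X₁ ∈ T) (h₃ : S.X₃ ∈ T) : S.X₂ ∈ T :=
  hT.mem_of_exact S.f.hom S.g.hom hS.moduleCat_range_eq_ker.ge h₁ h₃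

lemma mem_of_subsingleton (hT : IsTorsionTheory R T)
    (hne : T.Nonempty) (A : Type u) [AddCommGroup A] [Module R A]
    [Subsingleton A] : ModuleCat.of R A ∈ T := by
  obtain ⟨N, hN⟩ := hne
  exact hT.mem_of_injective (0 : A →ₗ[R] N) (Function.injective_of_subsingleton _) hN

lemma prod_mem (hT : IsTorsionTheory R T)
    {A B : Type u} [AddCommGroup A] [Module R A] [AddCommGroup B] [Module R B]
    (hA : ModuleCat.of R A ∈ T) (hB : ModuleCat.of R B ∈ T) : ModuleCat.of R (A × B) ∈ T :=
  hT.mem_of_exact (LinearMap.inl R A B) (LinearMap.snd R A B)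
    (LinearMap.range_inl R A B).ge hA hB

lemma pi_fin_mem (hT : IsTorsionTheory R T)
    {A : Type u} [AddCommGroup A] [Module R A] (hA : ModuleCat.of R A ∈ T)
    (k : ℕ) : ModuleCat.of R (Fin k → A) ∈ T := by
  induction k with
  | zero => exact hT.mem_of_subsingleton ⟨_, hA⟩ _
  | succ k ih =>
    exact hT.mem_of_surjective (Fin.consLinearEquiv R (fun _ : Fin (k + 1) => A)).toLinearMap
      (LinearEquiv.surjective _) (hT.prod_mem hA ih)

lemma linearMap_mem (hT : IsTorsionTheory R T)
    {P A : Type u} [AddCommGroup P] [Module R P] [Module.Finite R P]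
    [AddCommGroup A] [Module R A] (hA : ModuleCat.of R A ∈ T) :
    ModuleCat.of R (P →ₗ[R] A) ∈ T := by
  obtain ⟨k, f, hf⟩ := Module.Finite.exists_fin' R P
  refine hT.mem_of_injective
    (LinearMap.pi fun i : Fin k => LinearMap.applyₗ (R := R) (f (Pi.single i 1))) ?_
    (hT.pi_fin_mem hA k)
  intro φ ψ h
  have : φ ∘ₗ f = ψ ∘ₗ f := LinearMap.pi_ext' fun i => LinearMap.ext_ring (congrFun h i)
  exact (LinearMap.cancel_right hf).1 this

lemma homology_mem (hT : IsTorsionTheory R T)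
    (S : ShortComplex (ModuleCat.{u} R)) (h : S.X₂ ∈ T) : S.homology ∈ T := by
  refine hT.mem_of_iso S.moduleCatHomologyIso.symm ?_
  exact hT.quotient_mem (hT.submodule_mem h (LinearMap.ker S.g.hom)) _

variable (T) in
/-- The largest submodule of `M` belonging to the class `T`, when `T` is a torsion theory. -/
def _root_.torsionSubmodule (M : Type u) [AddCommGroup M] [Module R M] : Submodule R M :=
  ⨆ S : {S : Submodule R M // ModuleCat.of R S ∈ T}, S.1

lemma torsionSubmodule_mem (hT : IsTorsionTheory R T)
    (hne : T.Nonempty) (M : Type u) [AddCommGroup M] [Module R M] :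
    ModuleCat.of R (torsionSubmodule T M) ∈ T := by
  let ι := {S : Submodule R M // ModuleCat.of R S ∈ T}
  have : Nonempty ι := ⟨⟨⊥, hT.mem_of_subsingleton hne _⟩⟩
  have hdir : Directed (· ≤ ·) (fun S : ι => S.1) := by
    intro S S'
    refine ⟨⟨S.1 ⊔ S'.1, ?_⟩, le_sup_left, le_sup_right⟩
    let f : S.1 × S'.1 →ₗ[R] M := S.1.subtype.coprod S'.1.subtype
    have hf : LinearMap.range f = S.1 ⊔ S'.1 := by simp [f, LinearMap.range_coprod]
    rw [← hf]
    exact hT.mem_of_surjective f.rangeRestrict f.surjective_rangeRestrict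
      (hT.prod_mem S.2 S'.2)
  have hle (S : ι) : S.1 ≤ torsionSubmodule T M := le_iSup (fun S : ι => S.1) S
  refine hT.directed_mem (N := ModuleCat.of R (torsionSubmodule T M))
    (fun S : ι => S.1.comap (torsionSubmodule T M).subtype) ?_ ?_ ?_
  · intro S S'
    obtain ⟨U, h, h'⟩ := hdir S S'
    exact ⟨U, Submodule.comap_mono h, Submodule.comap_mono h'⟩
  · exact fun S => hT.mem_of_surjective (Submodule.comapSubtypeEquivOfLe (hle S)).symm.toLinearMap
      (LinearEquiv.surjective _) S.2
  · rw [eq_top_iff]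
    rintro ⟨m, hm⟩ -
    obtain ⟨S, hS⟩ := (Submodule.mem_iSup_of_directed _ hdir).1 hm
    exact Submodule.mem_iSup_of_mem S hS

lemma eq_zero_of_linearMap_quotient (hT : IsTorsionTheory R T)
    (hne : T.Nonempty) {A M : Type u} [AddCommGroup M]
    [Module R M] [AddCommGroup A] [Module R A] (hA : ModuleCat.of R A ∈ T)
    (f : A →ₗ[R] M ⧸ torsionSubmodule T M) : f = 0 := by
  let t := torsionSubmodule T M
  let S : Submodule R M := (LinearMap.range f).comap t.mkQ
  have htS : t ≤ S := by
    intro m hm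
    have h0 : t.mkQ m = 0 := (Submodule.Quotient.mk_eq_zero t).2 hm
    exact Submodule.mem_comap.2 (h0 ▸ zero_mem _)
  have hS : ModuleCat.of R S ∈ T := by
    let g : S →ₗ[R] LinearMap.range f :=
      (t.mkQ ∘ₗ S.subtype).codRestrict (LinearMap.range f) (fun s => s.2)
    refine hT.mem_of_exact (Submodule.inclusion htS) g ?_ (hT.torsionSubmodule_mem hne M)
      (hT.mem_of_surjective f.rangeRestrict f.surjective_rangeRestrict hA)
    rintro ⟨s, hs⟩ h
    have : t.mkQ s = 0 := congrArg Subtype.val h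
    exact ⟨⟨s, (Submodule.Quotient.mk_eq_zero t).1 this⟩, rfl⟩
  ext x
  obtain ⟨m, hm⟩ := t.mkQ_surjective (f x)
  have hmS : m ∈ S := Submodule.mem_comap.2 ⟨x, hm.symm⟩
  rw [← hm, LinearMap.zero_apply]
  exact (Submodule.Quotient.mk_eq_zero t).2
    (le_iSup (fun S : {S : Submodule R M // ModuleCat.of R S ∈ T} => S.1) ⟨S, hS⟩ hmS)

end IsTorsionTheory

namespace Submodule

variable {E : Type u} [AddCommGroup E] [Module R E]

lemma exists_maximal_disjoint {C D : Submodule R E} (h : Disjoint C D) :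
    ∃ C', C ≤ C' ∧ Maximal (fun B => Disjoint B D) C' := by
  refine zorn_le_nonempty₀ {B : Submodule R E | Disjoint B D} ?_ C h
  intro c hc hchain B hB
  refine ⟨sSup c, ?_, fun _ => le_sSup⟩
  rw [Set.mem_ofPred_eq, disjoint_def]
  intro e he heD
  obtain ⟨B', hB', heB⟩ := (mem_sSup_of_directed ⟨B, hB⟩ hchain.directedOn).1 he
  exact disjoint_def.1 (hc hB') e heB heD

/-- In an injective module, a submodule maximal among those disjoint from `D` is injective. -/
lemma injective_of_maximal_disjoint [Module.Injective R E] {C D : Submodule R E}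
    (hC : Maximal (fun B => Disjoint B D) C) : Module.Injective R C := by
  obtain ⟨D', hDD', hD'⟩ := exists_maximal_disjoint hC.prop.symm
  have hCD' : Disjoint C D' := hD'.prop.symm
  let i : C →ₗ[R] E ⧸ D' := D'.mkQ ∘ₗ C.subtype
  have hi : Function.Injective i := by
    rw [injective_iff_map_eq_zero]
    rintro ⟨c, hc⟩ h
    have : c ∈ D' := (Quotient.mk_eq_zero D').1 h
    simpa using disjoint_def.1 hCD' c hc this
  obtain ⟨g, hg⟩ := Module.Injective.out i hi C.subtype
  -- every submodule of `E ⧸ D'` disjoint from the image of `C` is trivial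
  have hess (B : Submodule R (E ⧸ D')) (hB : ∀ c : C, i c ∈ B → c = 0) : B = ⊥ := by
    have hdisj : Disjoint (B.comap D'.mkQ) C := by
      rw [disjoint_def]
      intro e he hec
      exact congrArg Subtype.val (hB ⟨e, hec⟩ he)
    have hle : B.comap D'.mkQ ≤ D' := by
      refine hD'.le_of_ge hdisj fun d hd => ?_
      have : D'.mkQ d = 0 := (Quotient.mk_eq_zero D').2 hd
      exact mem_comap.2 (this ▸ zero_mem _)
    rw [eq_bot_iff]
    intro b hb
    obtain ⟨e, rfl⟩ := D'.mkQ_surjective b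
    exact (Quotient.mk_eq_zero D').2 (hle hb)
  have hrange : LinearMap.range g ≤ C := by
    refine hC.le_of_ge ?_ fun c hc => ⟨i ⟨c, hc⟩, hg ⟨c, hc⟩⟩
    rw [disjoint_def]
    rintro _ ⟨q, rfl⟩ hq
    have hbot := hess (D.comap g) fun c hc => by
      have hcD : (c : E) ∈ D := by simpa [hg] using hc
      exact Subtype.ext (disjoint_def.1 hC.prop c c.2 hcD)
    have : q ∈ D.comap g := hq
    rw [hbot, mem_bot] at this
    simp [this]
  let ρ : E →ₗ[R] C := (g ∘ₗ D'.mkQ).codRestrict C fun e => hrange ⟨_, rfl⟩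
  have hρ (c : C) : ρ c = c := Subtype.ext (hg c)
  refine ⟨fun X Y _ _ _ _ f hf φ => ?_⟩
  obtain ⟨ψ, hψ⟩ := Module.Injective.out f hf (C.subtype ∘ₗ φ)
  exact ⟨ρ ∘ₗ ψ, fun x => by rw [LinearMap.comp_apply, hψ]; exact hρ _⟩

end Submodule

/-- A module without nonzero elements killed by `a` embeds into an injective module with the
same property. -/
lemma exists_injective_embedding (a : Ideal R) (M : Type u) [AddCommGroup M] [Module R M]
    (hM : ∀ m : M, (∀ c ∈ a, c • m = 0) → m = 0) :
    ∃ (E : Type u) (_ : AddCommGroup E) (_ : Module R E) (_ : Module.Injective R E)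
      (f : M →ₗ[R] E), Function.Injective f ∧ ∀ e : E, (∀ c ∈ a, c • e = 0) → e = 0 := by
  let I := Injective.under (ModuleCat.of R M)
  let ι : M →ₗ[R] I := (Injective.ι (ModuleCat.of R M)).hom
  have hι : Function.Injective ι := (ModuleCat.mono_iff_injective _).1 inferInstance
  have : Module.Injective R I :=
    (Module.injective_iff_injective_object R I).2 (inferInstanceAs (Injective I))
  let D : Submodule R I := Submodule.torsionBySet R I a
  have hD (e : I) : e ∈ D ↔ ∀ c ∈ a, c • e = 0 :=
    (Submodule.mem_torsionBySet_iff _ _).trans Subtype.forall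
  have hdisj : Disjoint (LinearMap.range ι) D := by
    rw [Submodule.disjoint_def]
    rintro _ ⟨m, rfl⟩ hm
    rw [hM m fun c hc => hι
      (by rw [map_smul, map_zero]; exact (hD _).1 hm c hc), map_zero]
  obtain ⟨C, hle, hC⟩ := Submodule.exists_maximal_disjoint hdisj
  refine ⟨C, inferInstance, inferInstance, Submodule.injective_of_maximal_disjoint hC,
    ι.codRestrict C fun m => hle ⟨m, rfl⟩, fun m m' h => hι (congrArg Subtype.val h), ?_⟩
  intro e he
  exact Subtype.ext (Submodule.disjoint_def.1 hC.prop e e.2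
    ((hD _).2 fun c hc => congrArg Subtype.val (he c hc)))

/-- A complex of finitely generated projective modules which starts with a presentation of
`R ⧸ a` and all of whose homology modules are killed by `a`. -/
structure IsResolutionLike (K : ChainComplex (ModuleCat.{u} R) ℕ) (a : Ideal R) : Prop where
  projective : ∀ n, Projective (K.X n)
  finite : ∀ n, Module.Finite R (K.X n)
  smul_mem_range : ∀ n (z : K.X n), (∀ j, (K.d n j).hom z = 0) → ∀ c ∈ a,
    ∃ w : K.X (n + 1), (K.d (n + 1) n).hom w = c • z
  exists_augmentation : ∃ ε : K.X 0 →ₗ[R] R ⧸ a, Function.Surjective ε ∧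
    ∀ z, ε z = 0 ↔ ∃ w : K.X 1, (K.d 1 0).hom w = z

namespace ChainComplex

variable (K : ChainComplex (ModuleCat.{u} R) ℕ)

/-- Functoriality of `ChainComplex.linearYonedaObj` in the second variable. -/
def linearYonedaMap {M N : ModuleCat.{u} R} (g : M ⟶ N) :
    K.linearYonedaObj R M ⟶ K.linearYonedaObj R N where
  f i := ModuleCat.ofHom (Linear.rightComp R (K.X i) g)
  comm' i j _ := by
    ext φ
    exact (Category.assoc (K.d j i) φ g).symm

variable {K}

/-- The short complex of cochain complexes attached to a short complex of modules. -/
def linearYonedaShortComplex (K : ChainComplex (ModuleCat.{u} R) ℕ)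
    (S : ShortComplex (ModuleCat.{u} R)) : ShortComplex (CochainComplex (ModuleCat.{u} R) ℕ) where
  X₁ := K.linearYonedaObj R S.X₁
  X₂ := K.linearYonedaObj R S.X₂
  X₃ := K.linearYonedaObj R S.X₃
  f := K.linearYonedaMap S.f
  g := K.linearYonedaMap S.g
  zero := by
    ext i φ
    have h (ψ : K.X i ⟶ S.X₁) : (ψ ≫ S.f) ≫ S.g = 0 := by simp
    exact h φ

lemma linearYonedaShortComplex_shortExact (hK : ∀ n, Projective (K.X n))
    {S : ShortComplex (ModuleCat.{u} R)} (hS : S.ShortExact) :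
    (K.linearYonedaShortComplex S).ShortExact := by
  have := hS.mono_f
  have := hS.epi_g
  refine HomologicalComplex.shortExact_of_degreewise_shortExact _ fun n => ?_
  have := hK n
  refine { exact := ?_, mono_f := ?_, epi_g := ?_ }
  · rw [ShortComplex.moduleCat_exact_iff]
    intro (φ : K.X n ⟶ S.X₂) (hφ : φ ≫ S.g = 0)
    exact ⟨hS.exact.lift φ hφ, hS.exact.lift_f φ hφ⟩
  · rw [ModuleCat.mono_iff_injective]
    intro (φ : K.X n ⟶ S.X₁) (ψ : K.X n ⟶ S.X₁) (h : φ ≫ S.f = ψ ≫ S.f)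
    exact (cancel_mono S.f).1 h
  · rw [ModuleCat.epi_iff_surjective]
    intro (φ : K.X n ⟶ S.X₃)
    exact ⟨Projective.factorThru φ S.g, Projective.factorThru_comp φ S.g⟩

end ChainComplex

namespace IsResolutionLike

variable {K : ChainComplex (ModuleCat.{u} R) ℕ} {a : Ideal R}
  {T : Set (ModuleCat.{u} R)}

lemma homology_mem (hK : IsResolutionLike K a)
    (hT : IsTorsionTheory R T) {N : ModuleCat.{u} R} (hN : N ∈ T) (n : ℕ) :
    (K.linearYonedaObj R N).homology n ∈ T := by
  have := hK.finite n
  refine hT.homology_mem _ ?_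
  exact hT.mem_of_iso (ModuleCat.homLinearEquiv (R := R) (S := R)
    (M := K.X n) (N := N)).symm.toModuleIso (hT.linearMap_mem (P := K.X n) hN)

lemma isZero_homology (hK : IsResolutionLike K a)
    {E : ModuleCat.{u} R} [Injective E]
    (hE : ∀ e : E, (∀ c ∈ a, c • e = 0) → e = 0) (n : ℕ) :
    Limits.IsZero ((K.linearYonedaObj R E).homology n) := by
  rw [← HomologicalComplex.exactAt_iff_isZero_homology, HomologicalComplex.exactAt_iff,
    ShortComplex.moduleCat_exact_iff]
  let m := (ComplexShape.up ℕ).prev n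
  intro (φ : K.X n ⟶ E) (hφ : K.d _ n ≫ φ = 0)
  rw [CochainComplex.next] at hφ
  change ∃ ψ : K.X m ⟶ E, K.d n m ≫ ψ = φ
  have hker : LinearMap.ker (K.d n m).hom ≤ LinearMap.ker φ.hom := by
    intro z hz
    refine hE _ fun c hc => ?_
    have hz' (j : ℕ) : (K.d n j).hom z = 0 := by
      by_cases hj : j + 1 = n
      · have : m = j := (ComplexShape.up ℕ).prev_eq' hj
        exact this ▸ hz
      · rw [K.shape n j hj]
        rfl
    obtain ⟨w, hw⟩ := hK.smul_mem_range n z hz' c hc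
    rw [← map_smul, ← hw]
    exact ConcreteCategory.congr_hom hφ w
  let q := (LinearMap.ker (K.d n m).hom).liftQ (K.d n m).hom le_rfl
  have hq : Function.Injective q :=
    LinearMap.ker_eq_bot.1 (Submodule.ker_liftQ_eq_bot _ _ _ le_rfl)
  have : Module.Injective R E :=
    (Module.injective_iff_injective_object R E).2 (inferInstanceAs (Injective E))
  obtain ⟨ψ, hψ⟩ := Module.Injective.out q hq ((LinearMap.ker (K.d n m).hom).liftQ φ.hom hker)
  exact ⟨ModuleCat.ofHom ψ, by ext z; exact hψ (Submodule.Quotient.mk z)⟩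

lemma homology_mem_iff_of_torsion (hK : IsResolutionLike K a)
    {S : ShortComplex (ModuleCat.{u} R)} (hS : S.ShortExact)
    (hT : IsTorsionTheory R T) (h₁ : S.X₁ ∈ T) (n : ℕ) :
    (K.linearYonedaObj R S.X₂).homology n ∈ T ↔ (K.linearYonedaObj R S.X₃).homology n ∈ T := by
  have hex := ChainComplex.linearYonedaShortComplex_shortExact hK.projective hS
  constructor
  · intro h
    exact hT.mem_of_shortComplex_exact (hex.homology_exact₃ n (n + 1) rfl) h
      (hK.homology_mem hT h₁ (n + 1))
  · intro h
    exact hT.mem_of_shortComplex_exact (hex.homology_exact₂ n) (hK.homology_mem hT h₁ n) h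

lemma homology_succ_mem_iff (hK : IsResolutionLike K a)
    {S : ShortComplex (ModuleCat.{u} R)} (hS : S.ShortExact)
    (hT : IsTorsionTheory R T) [Injective S.X₂]
    (hE : ∀ e : S.X₂, (∀ c ∈ a, c • e = 0) → e = 0) (n : ℕ) :
    (K.linearYonedaObj R S.X₁).homology (n + 1) ∈ T ↔
      (K.linearYonedaObj R S.X₃).homology n ∈ T := by
  have hex := ChainComplex.linearYonedaShortComplex_shortExact hK.projective hS
  let e := hex.δIso n (n + 1) rfl (hK.isZero_homology hE n) (hK.isZero_homology hE (n + 1))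
  exact ⟨hT.mem_of_iso e.symm, hT.mem_of_iso e⟩

lemma homology_zero_mem_iff (hK : IsResolutionLike K a)
    (hT : IsTorsionTheory R T) (M : ModuleCat.{u} R) :
    (K.linearYonedaObj R M).homology 0 ∈ T ↔ ModuleCat.of R ((R ⧸ a) →ₗ[R] M) ∈ T := by
  obtain ⟨ε, hε, hker⟩ := hK.exists_augmentation
  let S := (K.linearYonedaObj R M).sc 0
  have : IsIso S.homologyπ := S.isIso_homologyπ ((K.linearYonedaObj R M).shape _ _ (by simp))
  let e₁ : S.homology ≅ ModuleCat.of R (LinearMap.ker S.g.hom) :=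
    (asIso S.homologyπ).symm ≪≫ S.moduleCatCyclesIso
  have hg (φ : K.X 0 ⟶ M) : S.g.hom φ = 0 ↔ K.d 1 0 ≫ φ = 0 := by
    change K.d ((ComplexShape.up ℕ).next 0) 0 ≫ φ = 0 ↔ _
    rw [CochainComplex.next, zero_add]
  let e₂ : LinearMap.ker S.g.hom ≃ₗ[R] ((R ⧸ a) →ₗ[R] M) := by
    refine LinearEquiv.symm (LinearEquiv.ofBijective
      (LinearMap.codRestrict (LinearMap.ker S.g.hom)
        ((ModuleCat.homLinearEquiv (R := R) (S := R) (M := K.X 0) (N := M)).symm.toLinearMap ∘ₗ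
          LinearMap.lcomp R M ε) ?_) ⟨?_, ?_⟩)
    · intro ψ
      refine (hg _).2 ?_
      ext w
      change ψ (ε ((K.d 1 0).hom w)) = 0
      rw [(hker _).2 ⟨w, rfl⟩, map_zero]
    · intro ψ ψ' h
      refine (LinearMap.cancel_right hε).1 ?_
      exact congrArg (fun φ : K.X 0 ⟶ M => φ.hom) (congrArg Subtype.val h)
    · rintro ⟨(φ : K.X 0 ⟶ M), hφ⟩
      have hφ' := (hg φ).1 hφ
      have hle : LinearMap.ker ε ≤ LinearMap.ker φ.hom := by
        intro z hz
        obtain ⟨w, rfl⟩ := (hker z).1 hz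
        exact ConcreteCategory.congr_hom hφ' w
      let ψ := (LinearMap.ker ε).liftQ φ.hom hle ∘ₗ
        (ε.quotKerEquivOfSurjective hε).symm.toLinearMap
      refine ⟨ψ, Subtype.ext ?_⟩
      apply ModuleCat.hom_ext (M := K.X 0) (N := M)
      ext z
      change (LinearMap.ker ε).liftQ φ.hom hle ((ε.quotKerEquivOfSurjective hε).symm (ε z)) = _
      have : (ε.quotKerEquivOfSurjective hε).symm (ε z) = Submodule.Quotient.mk z := by
        rw [LinearEquiv.symm_apply_eq]
        rfl
      rw [this]
      rfl
  let e := e₁ ≪≫ e₂.toModuleIso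
  exact ⟨hT.mem_of_iso e, hT.mem_of_iso e.symm⟩

/-- Membership in a torsion theory of the cohomology modules of `Hom(K, M)` in an initial range
of degrees does not depend on the complex `K`. -/
lemma homology_mem_of_homology_mem (hK : IsResolutionLike K a)
    {K' : ChainComplex (ModuleCat.{u} R) ℕ}
    (hK' : IsResolutionLike K' a) (hT : IsTorsionTheory R T) (n : ℕ) (M : ModuleCat.{u} R)
    (h : ∀ i < n, (K.linearYonedaObj R M).homology i ∈ T) :
    ∀ i < n, (K'.linearYonedaObj R M).homology i ∈ T := by
  induction n generalizing M with
  | zero => intro i hi; omega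
  | succ n ih =>
    have hne : T.Nonempty := ⟨_, h 0 n.succ_pos⟩
    let t := torsionSubmodule T M
    let M' := M ⧸ t
    have hS := LinearMap.shortExact_shortComplexKer t.mkQ_surjective
    have ht : ModuleCat.of R (LinearMap.ker t.mkQ) ∈ T := by
      rw [Submodule.ker_mkQ]
      exact hT.torsionSubmodule_mem hne M
    have hMM' (i : ℕ) := hK.homology_mem_iff_of_torsion hS hT ht i
    have hMM'' (i : ℕ) := hK'.homology_mem_iff_of_torsion hS hT ht i
    have hHom : ModuleCat.of R ((R ⧸ a) →ₗ[R] M') ∈ T :=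
      (hK.homology_zero_mem_iff hT (ModuleCat.of R M')).1 ((hMM' 0).1 (h 0 n.succ_pos))
    have hM' (m : M') (hm : ∀ c ∈ a, c • m = 0) : m = 0 := by
      let f : (R ⧸ a) →ₗ[R] M' := Submodule.liftQ a (LinearMap.toSpanSingleton R M' m)
        fun c hc => hm c hc
      have hz := hT.eq_zero_of_linearMap_quotient hne hHom
        (LinearMap.applyₗ (R := R) (Submodule.Quotient.mk (p := a) 1))
      have hfz : f (Submodule.Quotient.mk 1) = 0 := LinearMap.congr_fun hz f
      have hf1 : f (Submodule.Quotient.mk 1) = (1 : R) • m := rfl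
      rwa [hf1, one_smul] at hfz
    obtain ⟨E, _, _, _, f, hf, hE⟩ := exists_injective_embedding a M' hM'
    let S : ShortComplex (ModuleCat.{u} R) :=
      ShortComplex.mk (ModuleCat.ofHom f) (ModuleCat.ofHom (LinearMap.range f).mkQ)
        (ModuleCat.hom_ext (LinearMap.range_mkQ_comp f))
    have hS' : S.ShortExact :=
      { exact := by
          rw [ShortComplex.moduleCat_exact_iff]
          exact fun e he => (Submodule.Quotient.mk_eq_zero _).1 he
        mono_f := (ModuleCat.mono_iff_injective _).2 hf
        epi_g := (ModuleCat.epi_iff_surjective _).2 (Submodule.mkQ_surjective _) }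
    have : Injective S.X₂ := Module.injective_object_of_injective_module R E
    have hQ := ih S.X₃ fun i hi => (hK.homology_succ_mem_iff hS' hT hE i).1
      ((hMM' (i + 1)).1 (h (i + 1) (by omega)))
    rintro (_ | i) hi
    · exact (hMM'' 0).2 ((hK'.homology_zero_mem_iff hT (ModuleCat.of R M')).2 hHom)
    · exact (hMM'' (i + 1)).2 ((hK'.homology_succ_mem_iff hS' hT hE i).2 (hQ i (by omega)))

end IsResolutionLike

namespace IsCoherentRing

lemma finitePresentation_of_injective (hR : IsCoherentRing R)
    {k : ℕ} {N : Type u} [AddCommGroup N] [Module R N]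
    [Module.Finite R N] (f : N →ₗ[R] (Fin k → R)) (hf : Function.Injective f) :
    Module.FinitePresentation R N := by
  induction k generalizing N with
  | zero =>
    have : Subsingleton N := hf.subsingleton
    have : Module.Free R N := Module.Free.of_subsingleton R N
    exact Module.finitePresentation_of_projective R N
  | succ k ih =>
    let p : N →ₗ[R] R := LinearMap.proj 0 ∘ₗ f
    have : Module.FinitePresentation R (LinearMap.range p) :=
      hR _ (Module.Finite.iff_fg.1 (Module.Finite.range p))
    have hfg : (LinearMap.ker p.rangeRestrict).FG :=
      Module.FinitePresentation.fg_ker p.rangeRestrict p.surjective_rangeRestrict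
    have : Module.Finite R (LinearMap.ker p.rangeRestrict) := Module.Finite.iff_fg.2 hfg
    have : Module.FinitePresentation R (LinearMap.ker p.rangeRestrict) := by
      refine ih (LinearMap.funLeft R R Fin.succ ∘ₗ f ∘ₗ
        (LinearMap.ker p.rangeRestrict).subtype) ?_
      rintro ⟨m, hm⟩ ⟨m', hm'⟩ h
      refine Subtype.ext (hf (funext fun i => ?_))
      have hz : f m 0 = 0 := congrArg Subtype.val hm
      have hz' : f m' 0 = 0 := congrArg Subtype.val hm'
      refine Fin.cases (hz.trans hz'.symm) (fun i => congrFun h i) i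
    exact Module.finitePresentation_of_ker p.rangeRestrict p.surjective_rangeRestrict

lemma ker_fg (hR : IsCoherentRing R)
    {k l : ℕ} (f : (Fin k → R) →ₗ[R] (Fin l → R)) : (LinearMap.ker f).FG := by
  have : Module.FinitePresentation R (LinearMap.range f) :=
    hR.finitePresentation_of_injective (LinearMap.range f).subtype (Submodule.subtype_injective _)
  rw [← LinearMap.ker_rangeRestrict]
  exact Module.FinitePresentation.fg_ker f.rangeRestrict f.surjective_rangeRestrict

end IsCoherentRing

/-- A projective resolution built from an augmented complex exact in all degrees. -/
def CategoryTheory.ProjectiveResolution.ofExact {C : Type*} [Category C] [Abelian C] {X : C}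
    (K : ChainComplex C ℕ) (hK : ∀ n, Projective (K.X n)) (ε : K.X 0 ⟶ X) [Epi ε]
    (hε : K.d 1 0 ≫ ε = 0) (h₀ : (ShortComplex.mk _ _ hε).Exact)
    (h : ∀ n, K.ExactAt (n + 1)) : ProjectiveResolution X where
  complex := K
  projective := hK
  π := (ChainComplex.toSingle₀Equiv _ _).symm ⟨ε, hε⟩
  quasiIso := ⟨fun n => by
    cases n
    · rw [ChainComplex.quasiIsoAt₀_iff, ShortComplex.quasiIso_iff_of_zeros']
      · refine (ShortComplex.exact_and_epi_g_iff_of_iso ?_).2 ⟨h₀, ‹Epi ε›⟩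
        exact ShortComplex.isoMk (Iso.refl _) (Iso.refl _) (Iso.refl _)
          ((Category.id_comp _).trans (Category.comp_id _).symm)
          ((Category.id_comp _).trans (by
            refine Eq.trans ?_ (Category.comp_id _).symm
            exact (ChainComplex.toSingle₀Equiv_symm_apply_f_zero ε hε).symm))
      · exact K.shape _ _ (by simp)
      all_goals rfl
    · rw [quasiIsoAt_iff_exactAt']
      · exact h _
      · apply ChainComplex.exactAt_succ_single_obj⟩

variable (R) in
/-- A finitely generated submodule of a finitely generated free module. -/
structure FreeSubmodule where
  rank : ℕ
  carrier : Submodule R (Fin rank → R)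
  fg : carrier.FG

namespace FreeSubmodule

/-- The rank of a finitely generated free module covering a given finitely generated submodule. -/
def coverRank (N : FreeSubmodule R) : ℕ :=
  ((Submodule.fg_iff_exists_fin_linearMap _ _).1 N.fg).choose

/-- A map from a finitely generated free module onto a given finitely generated submodule. -/
def cover (N : FreeSubmodule R) : (Fin N.coverRank → R) →ₗ[R] (Fin N.rank → R) :=
  ((Submodule.fg_iff_exists_fin_linearMap _ _).1 N.fg).choose_spec.choose

lemma range_cover (N : FreeSubmodule R) : LinearMap.range N.cover = N.carrier :=
  ((Submodule.fg_iff_exists_fin_linearMap _ _).1 N.fg).choose_spec.choose_spec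

/-- The syzygy module of a finitely generated submodule of a free module. -/
def syzygy (hR : IsCoherentRing R) (N : FreeSubmodule R) : FreeSubmodule R where
  rank := N.coverRank
  carrier := LinearMap.ker N.cover
  fg := hR.ker_fg N.cover

/-- The iterated syzygy modules. -/
def syzygies (hR : IsCoherentRing R) (N : FreeSubmodule R) : ℕ → FreeSubmodule R
  | 0 => N
  | n + 1 => (syzygies hR N n).syzygy hR

/-- The resolution by finitely generated free modules built from iterated syzygies. -/
def complex (hR : IsCoherentRing R) (N : FreeSubmodule R) : ChainComplex (ModuleCat.{u} R) ℕ :=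
  ChainComplex.of (fun n => ModuleCat.of R (Fin (N.syzygies hR n).rank → R))
    (fun n => ModuleCat.ofHom (N.syzygies hR n).cover) (fun n => by
      ext1
      refine LinearMap.ext fun v => ?_
      have : (N.syzygies hR (n + 1)).cover v ∈ LinearMap.range (N.syzygies hR (n + 1)).cover :=
        ⟨v, rfl⟩
      rw [range_cover] at this
      exact this)

lemma complex_d (hR : IsCoherentRing R) (N : FreeSubmodule R) (n : ℕ) :
    (N.complex hR).d (n + 1) n = ModuleCat.ofHom (N.syzygies hR n).cover :=
  ChainComplex.of_d (fun n => ModuleCat.of R (Fin (N.syzygies hR n).rank → R))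
    (fun n => ModuleCat.ofHom (N.syzygies hR n).cover) n

lemma complex_exactAt_succ (hR : IsCoherentRing R) (N : FreeSubmodule R) (n : ℕ) :
    (N.complex hR).ExactAt (n + 1) := by
  rw [HomologicalComplex.exactAt_iff' _ (n + 1 + 1) (n + 1) n (by simp) (by simp),
    ShortComplex.moduleCat_exact_iff_ker_sub_range]
  change LinearMap.ker ((N.complex hR).d (n + 1) n).hom ≤
    LinearMap.range ((N.complex hR).d (n + 1 + 1) (n + 1)).hom
  rw [complex_d, complex_d]
  exact (range_cover (N.syzygies hR (n + 1))).ge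

end FreeSubmodule

lemma IsCoherentRing.exists_projectiveResolution (hR : IsCoherentRing R) (X : Type u)
    [AddCommGroup X] [Module R X] [Module.FinitePresentation R X] :
    ∃ P : ProjectiveResolution (ModuleCat.of R X), ∀ n, Module.Finite R (P.complex.X n) := by
  obtain ⟨k, ε, hε⟩ := Module.Finite.exists_fin' R X
  let N : FreeSubmodule R := ⟨k, LinearMap.ker ε, Module.FinitePresentation.fg_ker ε hε⟩
  let ε' : (N.complex hR).X 0 ⟶ ModuleCat.of R X := ModuleCat.ofHom ε
  have : Epi ε' := (ModuleCat.epi_iff_surjective _).2 hε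
  have hrange : LinearMap.range ((N.complex hR).d 1 0).hom = LinearMap.ker ε'.hom := by
    rw [N.complex_d hR 0]
    exact N.range_cover
  have hzero : (N.complex hR).d 1 0 ≫ ε' = 0 :=
    ModuleCat.hom_ext (LinearMap.range_le_ker_iff.1 hrange.le)
  refine ⟨.ofExact (N.complex hR) (fun n => ?_) ε' hzero ?_ (N.complex_exactAt_succ hR),
    fun n => ?_⟩
  · exact inferInstanceAs (Projective (ModuleCat.of R (Fin (N.syzygies hR n).rank → R)))
  · exact (ShortComplex.moduleCat_exact_iff_range_eq_ker _).2 hrange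
  · exact inferInstanceAs (Module.Finite R (Fin (N.syzygies hR n).rank → R))

lemma CategoryTheory.ProjectiveResolution.isResolutionLike {a : Ideal R}
    (P : ProjectiveResolution (ModuleCat.of R (R ⧸ a)))
    (hP : ∀ n, Module.Finite R (P.complex.X n)) : IsResolutionLike P.complex a := by
  let ε : P.complex.X 0 →ₗ[R] R ⧸ a := (P.π.f 0).hom
  have hε : Function.Surjective ε :=
    (ModuleCat.epi_iff_surjective _).1 (inferInstanceAs (Epi (P.π.f 0)))
  have hker (z : P.complex.X 0) : ε z = 0 ↔ ∃ w : P.complex.X 1, (P.complex.d 1 0).hom w = z :=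
    (SetLike.ext_iff.1 P.exact₀.moduleCat_range_eq_ker z).symm
  refine ⟨P.projective, hP, ?_, ε, hε, hker⟩
  rintro (_ | n) z hz c hc
  · rw [zero_add, ← hker, map_smul]
    obtain ⟨y, hy⟩ := Ideal.Quotient.mk_surjective (ε z)
    rw [← hy]
    exact Ideal.Quotient.eq_zero_iff_mem.2 (a.mul_mem_right _ hc)
  · refine (SetLike.ext_iff.1 (P.exact_succ n).moduleCat_range_eq_ker (c • z)).2 ?_
    exact Submodule.smul_mem _ c (hz n)

namespace Koszul

variable {r : ℕ} (x : Fin r → R)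

/-- The sign `(-1) ^ #{k ∈ t | k < j}` occurring in the Koszul differential. -/
def sign (R : Type u) [CommRing R] (j : Fin r) (t : Finset (Fin r)) : R :=
  (-1) ^ (t.filter (fun k => k < j)).card

lemma sign_insert {i j : Fin r} {t : Finset (Fin r)} (hi : i ∉ t) :
    sign R j (insert i t) = (if i < j then -1 else 1) * sign R j t := by
  unfold sign
  split_ifs with h
  · rw [Finset.filter_insert, if_pos h, Finset.card_insert_of_notMem (by simp [hi]), pow_succ']
  · rw [Finset.filter_insert, if_neg h, one_mul]

lemma sign_mul_self (j : Fin r) (t : Finset (Fin r)) : sign R j t * sign R j t = 1 := by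
  rw [sign, ← mul_pow, neg_one_mul, neg_neg, one_pow]

lemma sign_insert_self (j : Fin r) (t : Finset (Fin r)) :
    sign R j (insert j t) = sign R j t := by
  rw [sign, sign, Finset.filter_insert, if_neg (lt_irrefl j)]

lemma sign_erase_self (j : Fin r) (t : Finset (Fin r)) :
    sign R j (t.erase j) = sign R j t := by
  by_cases h : j ∈ t
  · conv_rhs => rw [← Finset.insert_erase h, sign_insert_self]
  · rw [Finset.erase_eq_of_notMem h]

/-- Exchanging two elements in the iterated Koszul differential changes the sign. -/
lemma sign_mul_sign_erase {i j : Fin r} {t : Finset (Fin r)} (hi : i ∈ t) (hj : j ∈ t)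
    (hij : i ≠ j) :
    sign R i t * sign R j (t.erase i) = -(sign R j t * sign R i (t.erase j)) := by
  have h₁ : sign R j t = (if i < j then -1 else 1) * sign R j (t.erase i) := by
    rw [← sign_insert (Finset.notMem_erase i t), Finset.insert_erase hi]
  have h₂ : sign R i t = (if j < i then -1 else 1) * sign R i (t.erase j) := by
    rw [← sign_insert (Finset.notMem_erase j t), Finset.insert_erase hj]
  rw [h₁, h₂]
  rcases lt_or_gt_of_ne hij with h | h
  · simp [h, h.not_gt, mul_comm]
  · simp [h, h.not_gt, mul_comm]

/-- The degree `n` component of the Koszul complex. -/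
abbrev chains (R : Type u) [CommRing R] (r n : ℕ) : Type u :=
  {s : Finset (Fin r) // s.card = n} →₀ R

/-- The basis element of the degree `n` component attached to `s` if `s` has `n` elements, and
zero otherwise. -/
def basisElt (R : Type u) [CommRing R] (n : ℕ) (s : Finset (Fin r)) : chains R r n :=
  if h : s.card = n then Finsupp.single ⟨s, h⟩ 1 else 0

lemma basisElt_of_card {n : ℕ} {s : Finset (Fin r)} (h : s.card = n) :
    basisElt R n s = Finsupp.single ⟨s, h⟩ 1 := dif_pos h

lemma basisElt_of_card_ne {n : ℕ} {s : Finset (Fin r)} (h : s.card ≠ n) :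
    basisElt R n s = 0 := dif_neg h

lemma chains_hom_ext {n : ℕ} {M : Type*} [AddCommGroup M] [Module R M]
    {f g : chains R r n →ₗ[R] M} (h : ∀ s, s.card = n → f (basisElt R n s) = g (basisElt R n s)) :
    f = g := by
  refine Finsupp.lhom_ext' fun s => LinearMap.ext_ring ?_
  simpa [basisElt_of_card s.2] using h s.1 s.2

/-- The Koszul differential. -/
def diff (n : ℕ) : chains R r (n + 1) →ₗ[R] chains R r n :=
  Finsupp.linearCombination R fun t => ∑ j ∈ t.1, (sign R j t.1 * x j) • basisElt R n (t.1.erase j)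

lemma diff_basisElt (n : ℕ) (t : Finset (Fin r)) :
    diff x n (basisElt R (n + 1) t) =
      ∑ j ∈ t, (sign R j t * x j) • basisElt R n (t.erase j) := by
  by_cases h : t.card = n + 1
  · rw [basisElt_of_card h, diff, Finsupp.linearCombination_single, one_smul]
  · rw [basisElt_of_card_ne h, map_zero, Finset.sum_eq_zero]
    intro j hj
    rw [basisElt_of_card_ne, smul_zero]
    have := Finset.card_erase_add_one hj
    omega

lemma diff_comp_diff (n : ℕ) : diff x n ∘ₗ diff x (n + 1) = 0 := by
  refine chains_hom_ext fun t _ => ?_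
  simp only [LinearMap.comp_apply, diff_basisElt, map_sum, map_smul, Finset.smul_sum,
    LinearMap.zero_apply, smul_smul]
  rw [Finset.sum_sigma']
  refine Finset.sum_involution (fun p _ => ⟨p.2, p.1⟩) ?_ ?_ ?_ ?_
  · rintro ⟨i, j⟩ h
    simp only [Finset.mem_sigma, Finset.mem_erase] at h
    have hs := sign_mul_sign_erase (R := R) h.1 h.2.2 h.2.1.symm
    rw [Finset.erase_right_comm (a := j) (b := i), ← add_smul]
    convert zero_smul R _
    linear_combination (x i * x j) * hs
  · rintro ⟨i, j⟩ h _ heq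
    simp only [Finset.mem_sigma, Finset.mem_erase] at h
    exact h.2.1 (congrArg Sigma.fst heq)
  · rintro ⟨i, j⟩ h
    simp only [Finset.mem_sigma, Finset.mem_erase] at h ⊢
    exact ⟨h.2.2, h.2.1.symm, h.1⟩
  · rintro ⟨i, j⟩ h
    rfl

/-- The contracting homotopy of multiplication by `x p`. -/
def homotopy (R : Type u) [CommRing R] (p : Fin r) (n : ℕ) :
    chains R r n →ₗ[R] chains R r (n + 1) :=
  Finsupp.linearCombination R fun t =>
    if p ∈ t.1 then 0 else sign R p t.1 • basisElt R (n + 1) (insert p t.1)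

lemma homotopy_basisElt (p : Fin r) (n : ℕ) (t : Finset (Fin r)) :
    homotopy R p n (basisElt R n t) =
      if p ∈ t then 0 else sign R p t • basisElt R (n + 1) (insert p t) := by
  by_cases h : t.card = n
  · rw [basisElt_of_card h, homotopy, Finsupp.linearCombination_single, one_smul]
  · rw [basisElt_of_card_ne h, map_zero]
    split_ifs with hp
    · rfl
    · rw [basisElt_of_card_ne, smul_zero]
      rw [Finset.card_insert_of_notMem hp]
      omega

lemma diff_homotopy_basisElt_of_notMem {p : Fin r} (n : ℕ) {t : Finset (Fin r)} (hp : p ∉ t) :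
    diff x n (homotopy R p n (basisElt R n t)) = x p • basisElt R n t +
      ∑ j ∈ t, (sign R p t * (sign R j (insert p t) * x j)) •
        basisElt R n (insert p (t.erase j)) := by
  rw [homotopy_basisElt, if_neg hp, map_smul, diff_basisElt, Finset.sum_insert hp, smul_add,
    Finset.smul_sum, smul_smul, sign_insert_self, Finset.erase_insert hp, ← mul_assoc,
    sign_mul_self, one_mul]
  congr 1
  refine Finset.sum_congr rfl fun j hj => ?_
  rw [smul_smul, Finset.erase_insert_of_ne (ne_of_mem_of_not_mem hj hp).symm]

lemma diff_homotopy_zero (p : Fin r) : diff x 0 ∘ₗ homotopy R p 0 = x p • LinearMap.id := by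
  refine chains_hom_ext fun t ht => ?_
  obtain rfl := Finset.card_eq_zero.1 ht
  simp [diff_homotopy_basisElt_of_notMem]

lemma diff_homotopy_succ (p : Fin r) (n : ℕ) :
    diff x (n + 1) ∘ₗ homotopy R p (n + 1) + homotopy R p n ∘ₗ diff x n =
      x p • LinearMap.id := by
  refine chains_hom_ext fun t ht => ?_
  simp only [LinearMap.add_apply, LinearMap.comp_apply, LinearMap.smul_apply, LinearMap.id_apply]
  rw [diff_basisElt, map_sum]
  by_cases hp : p ∈ t
  · rw [homotopy_basisElt, if_pos hp, map_zero, zero_add, Finset.sum_eq_single_of_mem p hp]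
    · rw [map_smul, homotopy_basisElt, if_neg (Finset.notMem_erase p t), smul_smul,
        sign_erase_self, Finset.insert_erase hp, mul_right_comm, sign_mul_self, one_mul]
    · intro j hj hjp
      rw [map_smul, homotopy_basisElt, if_pos (Finset.mem_erase.2 ⟨hjp.symm, hp⟩), smul_zero]
  · rw [diff_homotopy_basisElt_of_notMem x (n + 1) hp, add_assoc, ← Finset.sum_add_distrib,
      Finset.sum_eq_zero, add_zero]
    intro j hj
    have hjp : p ≠ j := (ne_of_mem_of_not_mem hj hp).symm
    rw [map_smul, homotopy_basisElt, if_neg (fun h => hp (Finset.mem_of_mem_erase h)), smul_smul,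
      ← add_smul]
    have hs := sign_mul_sign_erase (R := R) (Finset.mem_insert_self p t)
      (Finset.mem_insert_of_mem hj) hjp
    rw [sign_insert_self, Finset.erase_insert hp, Finset.erase_insert_of_ne hjp,
      sign_insert_self] at hs
    have hC : sign R j (insert p t) * sign R j (insert p t) = 1 := sign_mul_self _ _
    have hB : sign R j t * sign R j t = 1 := sign_mul_self _ _
    convert zero_smul R _
    linear_combination (x j * sign R j (insert p t) * sign R j t) * hs -
      (x j * sign R p t * sign R j (insert p t)) * hB -
      (x j * sign R j t * sign R p (t.erase j)) * hC

/-- The Koszul complex of a finite family of elements. -/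
def complex : ChainComplex (ModuleCat.{u} R) ℕ :=
  ChainComplex.of (fun n => ModuleCat.of R (chains R r n)) (fun n => ModuleCat.ofHom (diff x n))
    (fun n => by
      rw [← ModuleCat.ofHom_comp, diff_comp_diff]
      rfl)

lemma complex_d (n : ℕ) : (complex x).d (n + 1) n = ModuleCat.ofHom (diff x n) :=
  ChainComplex.of_d (fun n => ModuleCat.of R (chains R r n))
    (fun n => ModuleCat.ofHom (diff x n)) n

lemma exists_diff_eq_smul (n : ℕ) (z : chains R r n)
    (hz : ∀ m (h : n = m + 1), diff x m (h ▸ z) = 0) (c : R)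
    (hc : c ∈ Ideal.span (Set.range x)) : ∃ w, diff x n w = c • z := by
  induction hc using Submodule.span_induction with
  | mem c hc =>
    obtain ⟨p, rfl⟩ := hc
    refine ⟨homotopy R p n z, ?_⟩
    cases n with
    | zero => exact LinearMap.congr_fun (diff_homotopy_zero x p) z
    | succ n =>
      have h := LinearMap.congr_fun (diff_homotopy_succ x p n) z
      have hz' : diff x n z = 0 := hz n rfl
      simpa [hz'] using h
  | zero => exact ⟨0, by simp⟩
  | add c d _ _ hc hd =>
    obtain ⟨v, hv⟩ := hc
    obtain ⟨w, hw⟩ := hd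
    exact ⟨v + w, by rw [map_add, hv, hw, add_smul]⟩
  | smul b c _ hc =>
    obtain ⟨v, hv⟩ := hc
    exact ⟨b • v, by rw [map_smul, hv, smul_assoc]⟩

/-- The augmentation of the Koszul complex. -/
def augmentation (a : Ideal R) : chains R r 0 →ₗ[R] R ⧸ a :=
  Finsupp.linearCombination R fun _ => (1 : R ⧸ a)

lemma augmentation_smul_basisElt (a : Ideal R) (c : R) :
    augmentation a (c • basisElt R 0 (∅ : Finset (Fin r))) = Ideal.Quotient.mk a c := by
  rw [basisElt_of_card Finset.card_empty, map_smul, augmentation,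
    Finsupp.linearCombination_single, one_smul, Algebra.smul_def, mul_one]
  rfl

lemma exists_eq_smul_basisElt (z : chains R r 0) : ∃ c : R, z = c • basisElt R 0 ∅ := by
  refine ⟨z ⟨∅, Finset.card_empty⟩, ?_⟩
  rw [basisElt_of_card Finset.card_empty, Finsupp.smul_single, smul_eq_mul, mul_one]
  ext ⟨s, hs⟩
  obtain rfl := Finset.card_eq_zero.1 hs
  rw [Finsupp.single_eq_same]

lemma augmentation_comp_diff :
    augmentation (Ideal.span (Set.range x)) ∘ₗ diff x 0 = 0 := by
  refine chains_hom_ext fun t ht => ?_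
  obtain ⟨j, rfl⟩ := Finset.card_eq_one.1 ht
  rw [LinearMap.comp_apply, diff_basisElt, Finset.sum_singleton, Finset.erase_singleton,
    augmentation_smul_basisElt, LinearMap.zero_apply, Ideal.Quotient.eq_zero_iff_mem]
  exact Ideal.mul_mem_left _ _ (Ideal.subset_span ⟨j, rfl⟩)

lemma augmentation_surjective (a : Ideal R) :
    Function.Surjective (augmentation (r := r) a) := fun y => by
  obtain ⟨c, rfl⟩ := Ideal.Quotient.mk_surjective y
  exact ⟨_, augmentation_smul_basisElt _ c⟩

lemma augmentation_eq_zero_iff (z : chains R r 0) :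
    augmentation (Ideal.span (Set.range x)) z = 0 ↔ ∃ w, diff x 0 w = z := by
  refine ⟨fun hz => ?_, ?_⟩
  · obtain ⟨c, rfl⟩ := exists_eq_smul_basisElt z
    rw [augmentation_smul_basisElt, Ideal.Quotient.eq_zero_iff_mem] at hz
    exact exists_diff_eq_smul x 0 _ (fun m h => by omega) c hz
  · rintro ⟨w, rfl⟩
    exact LinearMap.congr_fun (augmentation_comp_diff x) w

lemma isResolutionLike_complex : IsResolutionLike (complex x) (Ideal.span (Set.range x)) where
  projective n := inferInstanceAs (Projective (ModuleCat.of R (chains R r n)))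
  finite n := inferInstanceAs (Module.Finite R (chains R r n))
  smul_mem_range n z hz c hc := by
    rw [complex_d]
    refine exists_diff_eq_smul x n z ?_ c hc
    rintro m rfl
    have h := hz m
    rw [complex_d] at h
    exact h
  exists_augmentation := by
    rw [complex_d]
    exact ⟨augmentation _, augmentation_surjective _, augmentation_eq_zero_iff x⟩

end Koszul

/-- A description of the homology of a short complex of modules after transport of the middle
term along a linear equivalence. -/
def CategoryTheory.ShortComplex.homologyIsoOfLinearEquiv (S : ShortComplex (ModuleCat.{u} R))
    {V : Type u} [AddCommGroup V] [Module R V] (e : S.X₂ ≃ₗ[R] V) (Z B : Submodule R V)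
    (hZ : ∀ v, S.g.hom v = 0 ↔ e v ∈ Z) (hB : ∀ v, v ∈ LinearMap.range S.f.hom ↔ e v ∈ B) :
    S.homology ≅ ModuleCat.of R (Z ⧸ B.comap Z.subtype) :=
  S.moduleCatHomologyIso ≪≫ LinearEquiv.toModuleIso
    (Submodule.Quotient.equiv _ _
      (e.ofSubmodules (LinearMap.ker S.g.hom) Z (by
        ext v
        obtain ⟨v, rfl⟩ := e.surjective v
        rw [← hZ]
        simp))
      (by
        ext ⟨v, hv⟩
        obtain ⟨v, rfl⟩ := e.surjective v
        rw [← hZ] at hv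
        simp only [Submodule.mem_map, Submodule.mem_comap, Submodule.subtype_apply]
        rw [← hB]
        constructor
        · rintro ⟨_, ⟨w, rfl⟩, h⟩
          exact ⟨w, e.injective (congrArg Subtype.val h)⟩
        · rintro ⟨w, rfl⟩
          exact ⟨_, ⟨w, rfl⟩, rfl⟩))

namespace Koszul

variable {r : ℕ} (x : Fin r → R) (M : Type u) [AddCommGroup M] [Module R M]

/-- Linear maps out of the Koszul complex are families indexed by finite subsets. -/
def homEquiv (n : ℕ) : (ModuleCat.of R (chains R r n) ⟶ ModuleCat.of R M) ≃ₗ[R]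
    ({s : Finset (Fin r) // s.card = n} → M) :=
  ModuleCat.homLinearEquiv.trans (Finsupp.llift M R R _).symm

lemma koszulDiff_homEquiv (n : ℕ) (φ : ModuleCat.of R (chains R r n) ⟶ ModuleCat.of R M) :
    koszulDiff x M n (homEquiv M n φ) = homEquiv M (n + 1) (ModuleCat.ofHom (diff x n) ≫ φ) := by
  ext ⟨t, ht⟩
  have h : φ.hom (diff x n (basisElt R (n + 1) t)) =
      ∑ j ∈ t, (sign R j t * x j) • φ.hom (basisElt R n (t.erase j)) := by
    rw [diff_basisElt, map_sum]
    simp only [map_smul]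
  rw [← Finset.sum_attach, basisElt_of_card ht] at h
  refine Eq.trans (Finset.sum_congr rfl fun j _ => ?_) h.symm
  rw [basisElt_of_card (by rw [Finset.card_erase_of_mem j.2, ht, Nat.add_sub_cancel])]
  rfl

lemma range_koszulDiffIn_zero : LinearMap.range (koszulDiffIn x M 0) = ⊥ := by
  rw [LinearMap.range_eq_bot]
  refine LinearMap.ext fun φ => funext fun ⟨t, ht⟩ => ?_
  obtain rfl := Finset.card_eq_zero.1 ht
  rfl

lemma range_koszulDiffIn_succ (n : ℕ) :
    LinearMap.range (koszulDiffIn x M (n + 1)) = LinearMap.range (koszulDiff x M n) := by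
  ext φ
  constructor
  · rintro ⟨ψ, rfl⟩
    exact ⟨fun s => ψ ⟨s.1, by rw [s.2]⟩, rfl⟩
  · rintro ⟨ψ, rfl⟩
    exact ⟨fun s => ψ ⟨s.1, Nat.succ_injective s.2⟩, rfl⟩

/-- The cochain complex of linear maps from the Koszul complex to `M`. -/
abbrev cochainComplex : CochainComplex (ModuleCat.{u} R) ℕ :=
  (complex x).linearYonedaObj R (ModuleCat.of R M)

/-- The terms of the Koszul cochain complex are modules of families indexed by finite subsets. -/
def cochainsEquiv (n : ℕ) : (cochainComplex x M).X n ≃ₗ[R]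
    ({s : Finset (Fin r) // s.card = n} → M) :=
  homEquiv M n

lemma cochainsEquiv_d (n : ℕ) (φ : (cochainComplex x M).X n) :
    cochainsEquiv x M (n + 1) (((cochainComplex x M).d n (n + 1)).hom φ) =
      koszulDiff x M n (cochainsEquiv x M n φ) := by
  have h (ψ : (complex x).X n ⟶ ModuleCat.of R M) :
      cochainsEquiv x M (n + 1) ((complex x).d (n + 1) n ≫ ψ) =
        koszulDiff x M n (cochainsEquiv x M n ψ) := by
    rw [complex_d]
    exact (koszulDiff_homEquiv x M n ψ).symm
  exact h φ

lemma cochainComplex_d_eq_zero_iff (n : ℕ) (φ : (cochainComplex x M).X n) :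
    ((cochainComplex x M).d n (n + 1)).hom φ = 0 ↔
      cochainsEquiv x M n φ ∈ LinearMap.ker (koszulDiff x M n) := by
  rw [LinearMap.mem_ker, ← cochainsEquiv_d, LinearEquiv.map_eq_zero_iff]

lemma mem_range_cochainComplex_d_iff (n : ℕ) (φ : (cochainComplex x M).X (n + 1)) :
    φ ∈ LinearMap.range ((cochainComplex x M).d n (n + 1)).hom ↔
      cochainsEquiv x M (n + 1) φ ∈ LinearMap.range (koszulDiff x M n) := by
  rw [LinearMap.mem_range, LinearMap.mem_range, (cochainsEquiv x M n).surjective.exists]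
  refine exists_congr fun χ => ?_
  rw [← cochainsEquiv_d, EmbeddingLike.apply_eq_iff_eq]

lemma nonempty_homology_iso (n : ℕ) :
    Nonempty ((cochainComplex x M).homology n ≅ ModuleCat.of R (koszulCohomology x M n)) := by
  cases n with
  | zero =>
    refine ⟨(cochainComplex x M).homologyIsoSc' 0 0 1 (by simp) (by simp) ≪≫
      ((cochainComplex x M).sc' 0 0 1).homologyIsoOfLinearEquiv (cochainsEquiv x M 0) _ _
        (cochainComplex_d_eq_zero_iff x M 0) fun φ => ?_⟩
    have h : ((cochainComplex x M).sc' 0 0 1).f = 0 := (cochainComplex x M).shape 0 0 (by simp)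
    rw [range_koszulDiffIn_zero, h, ModuleCat.hom_zero, LinearMap.range_zero]
    exact (cochainsEquiv x M 0).map_eq_zero_iff.symm
  | succ n =>
    refine ⟨(cochainComplex x M).homologyIsoSc' n (n + 1) (n + 2) (by simp) (by simp) ≪≫
      ((cochainComplex x M).sc' n (n + 1) (n + 2)).homologyIsoOfLinearEquiv
        (cochainsEquiv x M (n + 1)) _ _
        (cochainComplex_d_eq_zero_iff x M (n + 1)) fun φ => ?_⟩
    rw [range_koszulDiffIn_succ]
    exact mem_range_cochainComplex_d_iff x M n φ

end Koszul

lemma ENat.sInf_image_coe_congr {s t : Set ℕ} (h : ∀ n, (∀ i < n, i ∉ s) ↔ ∀ i < n, i ∉ t) :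
    sInf ((↑· : ℕ → ℕ∞) '' s) = sInf ((↑· : ℕ → ℕ∞) '' t) := by
  have key {s t : Set ℕ} (h : ∀ n, (∀ i < n, i ∉ s) → ∀ i < n, i ∉ t) :
      sInf ((↑· : ℕ → ℕ∞) '' s) ≤ sInf ((↑· : ℕ → ℕ∞) '' t) := by
    refine le_sInf ?_
    rintro _ ⟨m, hm, rfl⟩
    by_contra! hlt
    refine h (m + 1) (fun i hi his => ?_) m m.lt_succ_self hm
    exact (hlt.trans_le (sInf_le ⟨i, his, rfl⟩)).not_ge (Nat.cast_le.2 (Nat.lt_succ_iff.1 hi))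
  exact le_antisymm (key fun n => (h n).1) (key fun n => (h n).2)

/-- **Theorem (Koszul grade = Ext grade over coherent rings).** Let `R` be a coherent
commutative ring, `𝔗` a torsion theory of `R`-modules, `𝔞` a finitely generated ideal of `R`
(generated by `x₁, …, x_r`) and `M` an `R`-module. Then
`𝔗-Kgrade_R(𝔞, M) = 𝔗-Egrade_R(𝔞, M)`. -/
theorem tKgrade_eq_tEgrade (hR : IsCoherentRing R) (T : Set (ModuleCat.{u} R))
    (hT : IsTorsionTheory R T) (a : Ideal R) (M : Type u) [AddCommGroup M] [Module R M]
    {r : ℕ} (x : Fin r → R) (hx : Ideal.span (Set.range x) = a) :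
    TKgrade T x M = TEgrade T a M := by
  subst hx
  have : Module.FinitePresentation R (R ⧸ Ideal.span (Set.range x)) :=
    Module.finitePresentation_of_surjective (Submodule.mkQ _) (Submodule.mkQ_surjective _) (by
      rw [Submodule.ker_mkQ]
      exact Submodule.fg_span (Set.finite_range x))
  obtain ⟨P, hP⟩ := hR.exists_projectiveResolution (R ⧸ Ideal.span (Set.range x))
  have hP' := P.isResolutionLike hP
  have hK := Koszul.isResolutionLike_complex x
  have hKoszul (i : ℕ) : ModuleCat.of R (koszulCohomology x M i) ∈ T ↔
      ((Koszul.complex x).linearYonedaObj R (ModuleCat.of R M)).homology i ∈ T := by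
    obtain ⟨e⟩ := Koszul.nonempty_homology_iso x M i
    exact ⟨hT.mem_of_iso e.symm, hT.mem_of_iso e⟩
  have hExt (i : ℕ) : ((Ext R (ModuleCat.{u} R) i).obj
      (Opposite.op (ModuleCat.of R (R ⧸ Ideal.span (Set.range x))))).obj (ModuleCat.of R M) ∈ T ↔
        (P.complex.linearYonedaObj R (ModuleCat.of R M)).homology i ∈ T :=
    ⟨hT.mem_of_iso (P.isoExt i _), hT.mem_of_iso (P.isoExt i _).symm⟩
  refine ENat.sInf_image_coe_congr fun n => ?_
  simp only [Set.mem_ofPred_eq, not_not, hKoszul, hExt]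
  exact ⟨hK.homology_mem_of_homology_mem hP' hT n _, hP'.homology_mem_of_homology_mem hK hT n _⟩
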